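/- For every A ∈ [0, |Ω|), the function α ↦ Λ(α,A) − α is strictly decreasing on (0,∞). -/

import Mathlib

open MeasureTheory ENNReal

noncomputable section

/-- The Euclidean Laplacian `Δu` of a function `u : ℝⁿ → ℝ`. -/
def lap {n : ℕ} (u : EuclideanSpace ℝ (Fin n) → ℝ) (x : EuclideanSpace ℝ (Fin n)) : ℝ :=
  ∑ i : Fin n, iteratedFDeriv ℝ 2 u x ![EuclideanSpace.single i 1, EuclideanSpace.single i 1]

/-- Smooth compactly supported test functions on `Ω`, not identically zero. -/
def TestFun {n : ℕ} (Ω : Set (EuclideanSpace ℝ (Fin n)))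
    (u : EuclideanSpace ℝ (Fin n) → ℝ) : Prop :=
  ContDiff ℝ (⊤ : ℕ∞) u ∧ HasCompactSupport u ∧ tsupport u ⊆ Ω ∧ u ≠ 0

/-- The generalized composite plate eigenvalue
`Λ(α,A) = inf_S inf_u (∫_Ω (Δu)² + α ∫_S u²) / ∫_Ω u²`,
the infima being over measurable `S ⊆ Ω` with `|S| = A` and over smooth compactly
supported `u : Ω → ℝ`, `u ≢ 0`. -/
def Lam {n : ℕ} (Ω : Set (EuclideanSpace ℝ (Fin n))) (α A : ℝ) : ℝ :=
  sInf { r : ℝ | ∃ S : Set (EuclideanSpace ℝ (Fin n)), MeasurableSet S ∧ S ⊆ Ω ∧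
      volume S = ENNReal.ofReal A ∧
      ∃ u : EuclideanSpace ℝ (Fin n) → ℝ, TestFun Ω u ∧
        r = ((∫ x in Ω, lap u x ^ 2) + α * ∫ x in S, u x ^ 2) / ∫ x in Ω, u x ^ 2 }

/-!
Given an open set `Ω` and `A < |Ω|`, there is a fixed `θ < 1` such that every `f ≥ 0` admits a set
`T ⊆ Ω` with `|T| = A` and `∫_T f ≤ θ ∫_Ω f`, obtained by filling the sublevel sets of `f` up to
volume `A` (the bathtub principle). Given a competitor `(S, u)` for `Λ(α, A)`, apply this to
`f = u²` and keep whichever of `S` and `T` carries less mass of `u²`. Raising `α` to `β` then raises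
the Rayleigh quotient by at most `θ (β - α)`, so `Λ(·, A)` has slope at most `θ < 1`.
-/

section BathtubPrinciple

open Filter Set
open scoped NNReal Topology

theorem exists_measure_preimage_Iio_le_and_le_measure_preimage_Iic {X β : Type*}
    [MeasurableSpace X] [CompleteLinearOrder β] [DenselyOrdered β] [TopologicalSpace β]
    [OrderTopology β] [FirstCountableTopology β] [MeasurableSpace β] [OpensMeasurableSpace β]
    (μ : Measure X) [IsFiniteMeasure μ] {f : X → β} (hf : Measurable f) {c : ℝ≥0∞}
    (hc : c ≤ μ univ) : ∃ t, μ (f ⁻¹' Iio t) ≤ c ∧ c ≤ μ (f ⁻¹' Iic t) := by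
  set t := sSup {s | μ (f ⁻¹' Iio s) ≤ c} with ht_def
  refine ⟨t, ?_, ?_⟩
  · obtain ⟨s, hs_mono, hs_lim, hs_le⟩ :=
      exists_seq_tendsto_sSup (S := {s | μ (f ⁻¹' Iio s) ≤ c}) ⟨⊥, by simp⟩ (OrderTop.bddAbove _)
    have hmono : Monotone fun k => f ⁻¹' Iio (s k) :=
      fun _ _ hij => preimage_mono (Iio_subset_Iio (hs_mono hij))
    rw [ht_def, ← (isLUB_of_tendsto_atTop hs_mono hs_lim).iUnion_Iio_eq, preimage_iUnion,
      hmono.measure_iUnion]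
    exact iSup_le hs_le
  · rcases eq_or_ne t ⊤ with ht | ht
    · rwa [ht, Iic_top, preimage_univ]
    have hinter : f ⁻¹' Iic t = ⋂ s > t, f ⁻¹' Iio s := by
      ext x
      simp only [mem_preimage, mem_Iic, mem_Iio, mem_iInter, gt_iff_lt, forall_gt_iff_le]
    have : (𝓝[>] t).NeBot := nhdsGT_neBot_of_exists_gt ⟨⊤, ht.lt_top⟩
    rw [hinter]
    refine ge_of_tendsto (tendsto_measure_biInter_gt
      (fun s _ => (hf measurableSet_Iio).nullMeasurableSet)
      (fun _ _ _ hij => preimage_mono (Iio_subset_Iio hij)) ⟨⊤, ht.lt_top, measure_ne_top _ _⟩) ?_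
    filter_upwards [self_mem_nhdsWithin] with s (hs : t < s)
    exact (not_le.1 fun h => hs.not_ge (le_sSup h)).le

theorem setIntegral_le_mul_of_setLIntegral_le {X : Type*} [MeasurableSpace X] {μ : Measure X}
    {S Ω : Set X} {f : X → ℝ} (hf : Integrable f μ) (hf0 : 0 ≤ f) {θ : ℝ≥0}
    (h : ∫⁻ x in S, ENNReal.ofReal (f x) ∂μ ≤ θ * ∫⁻ x in Ω, ENNReal.ofReal (f x) ∂μ) :
    ∫ x in S, f x ∂μ ≤ θ * ∫ x in Ω, f x ∂μ := by
  have h_int (T : Set X) : ENNReal.ofReal (∫ x in T, f x ∂μ) =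
      ∫⁻ x in T, ENNReal.ofReal (f x) ∂μ :=
    ofReal_integral_eq_lintegral_ofReal hf.restrict (ae_of_all _ hf0)
  have h_nonneg : 0 ≤ ∫ x in Ω, f x ∂μ := integral_nonneg hf0
  rwa [← h_int, ← h_int, ← ENNReal.ofReal_coe_nnreal, ← ENNReal.ofReal_mul θ.coe_nonneg,
    ENNReal.ofReal_le_ofReal_iff (by positivity)] at h

variable {E : Type*} [NormedAddCommGroup E] [NormedSpace ℝ E] [FiniteDimensional ℝ E]
  [Nontrivial E] [MeasurableSpace E] [BorelSpace E] (μ : Measure E) [μ.IsAddHaarMeasure]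

theorem addHaar_setOf_enorm_eq (t : ℝ≥0∞) : μ {x | ‖x‖ₑ = t} = 0 := by
  refine measure_mono_null (fun x hx => ?_) (Measure.addHaar_sphere μ 0 t.toReal)
  rw [mem_sphere_zero_iff_norm, ← toReal_enorm, hx]

theorem exists_measurableSet_between_addHaar_eq {U V : Set E} (hU : MeasurableSet U)
    (hV : MeasurableSet V) (hUV : U ⊆ V) (hV_fin : μ V ≠ ∞) {c : ℝ≥0∞} (hUc : μ U ≤ c)
    (hcV : c ≤ μ V) : ∃ S, MeasurableSet S ∧ U ⊆ S ∧ S ⊆ V ∧ μ S = c := by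
  have : IsFiniteMeasure (μ.restrict (V \ U)) :=
    ⟨by simpa using (measure_mono sdiff_subset).trans_lt hV_fin.lt_top⟩
  have hc : c - μ U ≤ μ.restrict (V \ U) univ := by
    rw [Measure.restrict_apply_univ]
    exact (tsub_le_tsub_right hcV _).trans le_measure_sdiff
  obtain ⟨t, ht_lt, ht_le⟩ :=
    exists_measure_preimage_Iio_le_and_le_measure_preimage_Iic _ measurable_enorm hc
  have hmeas : MeasurableSet ((‖·‖ₑ : E → ℝ≥0∞) ⁻¹' Iic t) := measurable_enorm measurableSet_Iic
  have hball : μ ((‖·‖ₑ) ⁻¹' Iic t ∩ (V \ U)) = c - μ U := by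
    rw [← Measure.restrict_apply hmeas]
    refine le_antisymm ((measure_mono_ae ?_).trans ht_lt) ht_le
    filter_upwards [ae_restrict_of_ae (measure_eq_zero_iff_ae_notMem.1
      (addHaar_setOf_enorm_eq μ t))] with x hx hle
    exact lt_of_le_of_ne hle hx
  refine ⟨U ∪ (‖·‖ₑ) ⁻¹' Iic t ∩ (V \ U), hU.union (hmeas.inter (hV.diff hU)), subset_union_left,
    union_subset hUV (inter_subset_right.trans sdiff_subset), ?_⟩
  rw [measure_union (disjoint_sdiff_right.mono_right inter_subset_right)
    (hmeas.inter (hV.diff hU)), hball, add_tsub_cancel_of_le hUc]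

theorem exists_subset_addHaar_eq_mul_setLIntegral_le {Ω : Set E} (hΩ : MeasurableSet Ω)
    (hΩ_fin : μ Ω ≠ ∞) {c : ℝ≥0∞} (hc : c ≤ μ Ω) {f : E → ℝ≥0∞} (hf : Measurable f) :
    ∃ S, MeasurableSet S ∧ S ⊆ Ω ∧ μ S = c ∧ μ Ω * ∫⁻ x in S, f x ∂μ ≤ c * ∫⁻ x in Ω, f x ∂μ := by
  have : IsFiniteMeasure (μ.restrict Ω) := ⟨by simpa using hΩ_fin.lt_top⟩
  obtain ⟨t, ht_lt, ht_le⟩ := exists_measure_preimage_Iio_le_and_le_measure_preimage_Iic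
    (μ.restrict Ω) hf (hc.trans_eq (Measure.restrict_apply_univ Ω).symm)
  have hlt : MeasurableSet (f ⁻¹' Iio t) := hf measurableSet_Iio
  have hle : MeasurableSet (f ⁻¹' Iic t) := hf measurableSet_Iic
  rw [Measure.restrict_apply hlt] at ht_lt
  rw [Measure.restrict_apply hle] at ht_le
  obtain ⟨S, hS, hltS, hSle, hSc⟩ := exists_measurableSet_between_addHaar_eq μ (hlt.inter hΩ)
    (hle.inter hΩ) (inter_subset_inter_left Ω (preimage_mono Iio_subset_Iic_self))
    (measure_ne_top_of_subset inter_subset_right hΩ_fin) ht_lt ht_le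
  have hSΩ : S ⊆ Ω := hSle.trans inter_subset_right
  have h_inside : ∫⁻ x in S, f x ∂μ ≤ t * c := by
    rw [← hSc, ← setLIntegral_const]
    exact setLIntegral_mono measurable_const fun x hx => (hSle hx).1
  have h_outside : t * μ (Ω \ S) ≤ ∫⁻ x in Ω \ S, f x ∂μ := by
    rw [← setLIntegral_const]
    exact setLIntegral_mono hf fun x hx => not_lt.1 fun h => hx.2 (hltS ⟨h, hx.1⟩)
  refine ⟨S, hS, hSΩ, hSc, ?_⟩
  calc μ Ω * ∫⁻ x in S, f x ∂μ
      = c * ∫⁻ x in S, f x ∂μ + μ (Ω \ S) * ∫⁻ x in S, f x ∂μ := by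
        rw [← measure_inter_add_sdiff Ω hS, inter_eq_self_of_subset_right hSΩ, hSc, add_mul]
    _ ≤ c * ∫⁻ x in S, f x ∂μ + μ (Ω \ S) * (t * c) := by gcongr
    _ = c * (∫⁻ x in S, f x ∂μ + t * μ (Ω \ S)) := by ring
    _ ≤ c * (∫⁻ x in S, f x ∂μ + ∫⁻ x in Ω \ S, f x ∂μ) := by gcongr
    _ = c * ∫⁻ x in Ω, f x ∂μ := by
        rw [← lintegral_inter_add_sdiff f Ω hS, inter_eq_self_of_subset_right hSΩ]

theorem exists_lt_one_forall_exists_setLIntegral_le {Ω : Set E} (hΩ : MeasurableSet Ω) {c : ℝ≥0∞}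
    (hc : c < μ Ω) : ∃ θ : ℝ≥0, θ < 1 ∧ ∀ f : E → ℝ≥0∞, Measurable f →
      ∃ S, MeasurableSet S ∧ S ⊆ Ω ∧ μ S = c ∧ ∫⁻ x in S, f x ∂μ ≤ θ * ∫⁻ x in Ω, f x ∂μ := by
  obtain ⟨Ω', hΩ', hsub, hcΩ', hfin⟩ := μ.exists_subset_measure_lt_top hΩ hc
  have hpos : μ Ω' ≠ 0 := (bot_le.trans_lt hcΩ').ne'
  have hlt : c / μ Ω' < 1 := ENNReal.div_lt_of_lt_mul (by rwa [one_mul])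
  lift c / μ Ω' to ℝ≥0 using hlt.ne_top with θ hθ
  refine ⟨θ, by exact_mod_cast hlt, fun f hf => ?_⟩
  obtain ⟨S, hS, hSΩ', hSc, hle⟩ :=
    exists_subset_addHaar_eq_mul_setLIntegral_le μ hΩ' hfin.ne hcΩ'.le hf
  refine ⟨S, hS, hSΩ'.trans hsub, hSc, ?_⟩
  calc ∫⁻ x in S, f x ∂μ
      ≤ c * (∫⁻ x in Ω', f x ∂μ) / μ Ω' := by
        rwa [ENNReal.le_div_iff_mul_le (.inl hpos) (.inl hfin.ne), mul_comm]
    _ = θ * ∫⁻ x in Ω', f x ∂μ := by rw [hθ, ENNReal.mul_div_right_comm]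
    _ ≤ θ * ∫⁻ x in Ω, f x ∂μ := by gcongr

end BathtubPrinciple

section CompositePlate

open Set
open scoped NNReal

variable {n : ℕ} {Ω S : Set (EuclideanSpace ℝ (Fin n))} {u : EuclideanSpace ℝ (Fin n) → ℝ} {α A : ℝ}

theorem exists_testFun (hΩ : IsOpen Ω) (hne : Ω.Nonempty) : ∃ u, TestFun Ω u := by
  obtain ⟨x, hx⟩ := hne
  obtain ⟨u, hsub, hcpt, hsmooth, -, hux⟩ :=
    exists_contDiff_tsupport_subset (n := ⊤) (hΩ.mem_nhds hx)
  exact ⟨u, hsmooth, hcpt, hsub, fun h => by simp [h] at hux⟩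

namespace TestFun

theorem continuous_sq (hu : TestFun Ω u) : Continuous fun x => u x ^ 2 :=
  hu.1.continuous.pow 2

theorem hasCompactSupport_sq (hu : TestFun Ω u) : HasCompactSupport fun x => u x ^ 2 :=
  hu.2.1.comp_left (g := (· ^ 2)) (zero_pow two_ne_zero)

theorem integrable_sq (hu : TestFun Ω u) : Integrable fun x => u x ^ 2 :=
  hu.continuous_sq.integrable_of_hasCompactSupport hu.hasCompactSupport_sq

theorem setIntegral_sq_pos (hu : TestFun Ω u) : 0 < ∫ x in Ω, u x ^ 2 := by
  obtain ⟨x, hx⟩ := Function.ne_iff.1 hu.2.2.2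
  rw [setIntegral_eq_integral_of_forall_compl_eq_zero fun y hy => by
    rw [image_eq_zero_of_notMem_tsupport fun h => hy (hu.2.2.1 h), zero_pow two_ne_zero]]
  exact hu.continuous_sq.integral_pos_of_hasCompactSupport_nonneg_nonzero
    hu.hasCompactSupport_sq (fun y => sq_nonneg (u y)) (pow_ne_zero 2 hx)

end TestFun

/-- The Rayleigh quotient `(∫_Ω (Δu)² + α ∫_S u²) / ∫_Ω u²` of the composite plate with domain `Ω`,
whose infimum over admissible `S` and `u` is `Lam Ω α A`. -/
def plateQuotient (Ω : Set (EuclideanSpace ℝ (Fin n))) (α : ℝ)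
    (S : Set (EuclideanSpace ℝ (Fin n))) (u : EuclideanSpace ℝ (Fin n) → ℝ) : ℝ :=
  ((∫ x in Ω, lap u x ^ 2) + α * ∫ x in S, u x ^ 2) / ∫ x in Ω, u x ^ 2

theorem plateQuotient_nonneg (hα : 0 ≤ α) (S : Set (EuclideanSpace ℝ (Fin n)))
    (u : EuclideanSpace ℝ (Fin n) → ℝ) : 0 ≤ plateQuotient Ω α S u := by
  have h_sq (T : Set (EuclideanSpace ℝ (Fin n))) (v : EuclideanSpace ℝ (Fin n) → ℝ) :
      0 ≤ ∫ x in T, v x ^ 2 := integral_nonneg fun x => sq_nonneg (v x)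
  exact div_nonneg (add_nonneg (h_sq _ _) (mul_nonneg hα (h_sq _ _))) (h_sq _ _)

theorem plateQuotient_le_add (hu : TestFun Ω u) {S' : Set (EuclideanSpace ℝ (Fin n))} {β θ : ℝ}
    (hα : 0 ≤ α) (hαβ : α ≤ β)
    (hS : ∫ x in S', u x ^ 2 ≤ ∫ x in S, u x ^ 2)
    (hθ : ∫ x in S', u x ^ 2 ≤ θ * ∫ x in Ω, u x ^ 2) :
    plateQuotient Ω β S' u ≤ plateQuotient Ω α S u + θ * (β - α) := by
  have h_pos := hu.setIntegral_sq_pos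
  rw [plateQuotient, plateQuotient, div_add' _ _ _ h_pos.ne']
  refine div_le_div_of_nonneg_right ?_ h_pos.le
  linarith [mul_le_mul_of_nonneg_left hS hα, mul_le_mul_of_nonneg_left hθ (sub_nonneg.2 hαβ)]

theorem Lam_le_plateQuotient (hα : 0 ≤ α) (hS : MeasurableSet S) (hSΩ : S ⊆ Ω)
    (hSA : volume S = ENNReal.ofReal A) (hu : TestFun Ω u) :
    Lam Ω α A ≤ plateQuotient Ω α S u := by
  refine csInf_le ⟨0, ?_⟩ ⟨S, hS, hSΩ, hSA, u, hu, rfl⟩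
  rintro _ ⟨T, -, -, -, v, -, rfl⟩
  exact plateQuotient_nonneg hα T v

theorem le_Lam (hS : ∃ S, MeasurableSet S ∧ S ⊆ Ω ∧ volume S = ENNReal.ofReal A)
    (hu : ∃ u, TestFun Ω u) {b : ℝ}
    (hb : ∀ S u, MeasurableSet S → S ⊆ Ω → volume S = ENNReal.ofReal A → TestFun Ω u →
      b ≤ plateQuotient Ω α S u) : b ≤ Lam Ω α A := by
  obtain ⟨S, hS, hSΩ, hSA⟩ := hS
  obtain ⟨u, hu⟩ := hu
  refine le_csInf ⟨_, S, hS, hSΩ, hSA, u, hu, rfl⟩ ?_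
  rintro _ ⟨T, hT, hTΩ, hTA, v, hv, rfl⟩
  exact hb T v hT hTΩ hTA hv

theorem exists_lt_one_forall_Lam_le_add [NeZero n] (hΩ : IsOpen Ω)
    (hA : ENNReal.ofReal A < volume Ω) : ∃ θ : ℝ≥0, θ < 1 ∧ ∀ α β : ℝ, 0 ≤ α → α ≤ β →
      Lam Ω β A ≤ Lam Ω α A + θ * (β - α) := by
  obtain ⟨θ, hθ, hbath⟩ :=
    exists_lt_one_forall_exists_setLIntegral_le volume hΩ.measurableSet hA
  refine ⟨θ, hθ, fun α β hα hαβ => ?_⟩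
  have hne : Ω.Nonempty := nonempty_of_measure_ne_zero (bot_le.trans_lt hA).ne'
  have hadm : ∃ S, MeasurableSet S ∧ S ⊆ Ω ∧ volume S = ENNReal.ofReal A :=
    (hbath 0 measurable_const).imp fun S hS => ⟨hS.1, hS.2.1, hS.2.2.1⟩
  rw [← sub_le_iff_le_add]
  refine le_Lam hadm (exists_testFun hΩ hne) fun S u hS hSΩ hSA hu => ?_
  obtain ⟨T, hT, hTΩ, hTA, hT_le⟩ := hbath _ hu.continuous_sq.measurable.ennreal_ofReal
  have hT_bath : ∫ x in T, u x ^ 2 ≤ θ * ∫ x in Ω, u x ^ 2 :=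
    setIntegral_le_mul_of_setLIntegral_le hu.integrable_sq (fun x => sq_nonneg (u x)) hT_le
  rw [sub_le_iff_le_add]
  rcases le_total (∫ x in T, u x ^ 2) (∫ x in S, u x ^ 2) with hTS | hST
  · exact (Lam_le_plateQuotient (hα.trans hαβ) hT hTΩ hTA hu).trans
      (plateQuotient_le_add hu hα hαβ hTS hT_bath)
  · exact (Lam_le_plateQuotient (hα.trans hαβ) hS hSΩ hSA hu).trans
      (plateQuotient_le_add hu hα hαβ le_rfl (hST.trans hT_bath))

end CompositePlate

theorem statement7_general {n : ℕ} [NeZero n] {Ω : Set (EuclideanSpace ℝ (Fin n))} (hΩ : IsOpen Ω)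
    {A : NNReal} (hA : A < volume Ω) :
    StrictAntiOn (fun α => Lam Ω α A - α) (Set.Ici (0 : ℝ)) := by
  obtain ⟨θ, hθ, hLam⟩ :=
    exists_lt_one_forall_Lam_le_add hΩ ((ENNReal.ofReal_coe_nnreal (p := A)).trans_lt hA)
  intro α hα β _ hαβ
  have h_slope : θ * (β - α) < β - α := mul_lt_of_lt_one_left (sub_pos.2 hαβ) hθ
  change Lam Ω β A - β < Lam Ω α A - α
  linarith [hLam α β hα hαβ.le]

/-- For every `A ∈ [0,|Ω|)`, the map `α ↦ Λ(α,A) − α` is strictly decreasing on `(0,∞)`. -/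
theorem statement7 {n : ℕ} (hn : 2 ≤ n) (Ω : Set (EuclideanSpace ℝ (Fin n)))
    (hne : Ω.Nonempty) (hΩo : IsOpen Ω) (hΩb : Bornology.IsBounded Ω)
    (A : ℝ) (hA0 : 0 ≤ A) (hA1 : A < (volume Ω).toReal) :
    StrictAntiOn (fun α => Lam Ω α A - α) (Set.Ioi (0 : ℝ)) := by
  have : NeZero n := ⟨by omega⟩
  lift A to NNReal using hA0
  have hA : A < volume Ω := by
    simpa using (ENNReal.ofReal_lt_iff_lt_toReal A.coe_nonneg hΩb.measure_lt_top.ne).2 hA1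
  exact (statement7_general hΩo hA).mono Set.Ioi_subset_Ici_self
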